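/- arXiv:1506.02608 — 2 statements merged into one kernel-verified Lean document; each statement's English description precedes it below -/
import Mathlib

section
/- For every integer ν ≥ 0 there exist smooth functions v_J, v_Y : (0,∞) → ℂ such that J_ν(ξ) = 2·Re( e(ξ/(2π))·v_J(ξ/π) ) and Y_ν(ξ) = 2·Re( e(ξ/(2π))·v_Y(ξ/π) ) for all ξ > 0, and such that for every integer μ ≥ 0 there is a constant C_{μ,ν} with |v_J^{(μ)}(ξ)| ≤ C_{μ,ν}·ξ^{−μ−1/2} and |v_Y^{(μ)}(ξ)| ≤ C_{μ,ν}·ξ^{−μ−1/2} for all ξ ≥ 1. -/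
noncomputable section

open MeasureTheory

/-- `e q = exp(2πiq)`. -/
def e (q : ℝ) : ℂ := Complex.exp (2 * Real.pi * Complex.I * q)

/-- The Bessel function of the first kind of nonnegative integer order,
`J_ν(ξ) = (1/π) ∫_0^π cos(νθ - ξ sin θ) dθ`. -/
def besselJ (ν : ℕ) (ξ : ℝ) : ℝ :=
  (1 / Real.pi) * ∫ θ in (0 : ℝ)..Real.pi, Real.cos (ν * θ - ξ * Real.sin θ)

/-- The Bessel function of the second kind of nonnegative integer order,
`Y_ν(ξ) = (1/π) ∫_0^π sin(ξ sin θ - νθ) dθ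
          - (1/π) ∫_0^∞ (e^{νt} + (-1)^ν e^{-νt}) e^{-ξ sinh t} dt`. -/
def besselY (ν : ℕ) (ξ : ℝ) : ℝ :=
  (1 / Real.pi) * (∫ θ in (0 : ℝ)..Real.pi, Real.sin (ξ * Real.sin θ - ν * θ)) -
    (1 / Real.pi) * ∫ t in Set.Ioi (0 : ℝ),
      (Real.exp (ν * t) + (-1 : ℝ) ^ ν * Real.exp (-(ν * t))) * Real.exp (-(ξ * Real.sinh t))

section Laplace

lemma lap_bound (P : ℝ → ℝ) (G : ℝ → ℂ) (K : ℝ) (ν : ℕ)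
    (hP : ∀ y, 0 ≤ y → y ^ 2 ≤ P y) (hG : ∀ y, 0 ≤ y → ‖G y‖ ≤ K * Real.exp (ν * y))
    (μ : ℕ) (x : ℝ) (hx : 0 < x) (y : ℝ) (hy : 0 ≤ y) :
    P y ^ μ * Real.exp (-(x * P y)) * ‖G y‖ ≤
      (μ.factorial * (2 / x) ^ μ * K * Real.exp (ν ^ 2 / x)) * Real.exp (-(x / 4) * y ^ 2) := by
  have hPy := hP y hy
  have hP0 : 0 ≤ P y := le_trans (sq_nonneg y) hPy
  have hK : 0 ≤ K := by
    by_contra h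
    push Not at h
    have := (norm_nonneg _).trans (hG y hy)
    nlinarith [Real.exp_pos (ν * y)]
  have h1 : P y ^ μ ≤ μ.factorial * (2 / x) ^ μ * Real.exp (x * P y / 2) := by
    have := Real.pow_div_factorial_le_exp (x * P y / 2) (by positivity) μ
    have hf : (0 : ℝ) < μ.factorial := by positivity
    rw [div_le_iff₀ hf] at this
    calc P y ^ μ = (2 / x) ^ μ * (x * P y / 2) ^ μ := by
          rw [← mul_pow]; congr 1; field_simp
      _ ≤ (2 / x) ^ μ * (Real.exp (x * P y / 2) * μ.factorial) := by gcongr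
      _ = _ := by ring
  have h2 : Real.exp (x * P y / 2) * Real.exp (-(x * P y)) * Real.exp (ν * y) ≤
      Real.exp (ν ^ 2 / x) * Real.exp (-(x / 4) * y ^ 2) := by
    rw [← Real.exp_add, ← Real.exp_add, ← Real.exp_add]
    apply Real.exp_le_exp.mpr
    have h3 : x * y ^ 2 ≤ x * P y := by gcongr
    have h4 : 0 ≤ (ν - x * y / 2) ^ 2 / x := by positivity
    have h5 : ((ν : ℝ) - x * y / 2) ^ 2 / x = ν ^ 2 / x - ν * y + x * y ^ 2 / 4 := by
      field_simp; ring
    linarith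
  calc P y ^ μ * Real.exp (-(x * P y)) * ‖G y‖
      ≤ (μ.factorial * (2 / x) ^ μ * Real.exp (x * P y / 2)) * Real.exp (-(x * P y)) *
        (K * Real.exp (ν * y)) := by gcongr; exact hG y hy
    _ = (μ.factorial * (2 / x) ^ μ * K) *
        (Real.exp (x * P y / 2) * Real.exp (-(x * P y)) * Real.exp (ν * y)) := by ring
    _ ≤ (μ.factorial * (2 / x) ^ μ * K) *
        (Real.exp (ν ^ 2 / x) * Real.exp (-(x / 4) * y ^ 2)) := by gcongr
    _ = _ := by ring

def lapF (P : ℝ → ℝ) (G : ℝ → ℂ) (μ : ℕ) (x y : ℝ) : ℂ :=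
  (((-(P y)) ^ μ * Real.exp (-(x * P y)) : ℝ) : ℂ) * G y

lemma lapF_norm (P : ℝ → ℝ) (G : ℝ → ℂ) (μ : ℕ) (x y : ℝ) (h : 0 ≤ P y) :
    ‖lapF P G μ x y‖ = P y ^ μ * Real.exp (-(x * P y)) * ‖G y‖ := by
  rw [lapF, norm_mul, Complex.norm_real, Real.norm_eq_abs, abs_mul, abs_pow, abs_neg,
    abs_of_nonneg h, Real.abs_exp]

lemma lapF_cont (P : ℝ → ℝ) (G : ℝ → ℂ) (hPc : Continuous P) (hGc : Continuous G) (μ : ℕ) (x : ℝ) :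
    Continuous (lapF P G μ x) := by
  unfold lapF
  fun_prop

lemma gauss_int (C x : ℝ) (hx : 0 < x) :
    IntegrableOn (fun y : ℝ => C * Real.exp (-(x / 4) * y ^ 2)) (Set.Ioi 0) :=
  ((integrable_exp_neg_mul_sq (by positivity)).const_mul C).integrableOn

lemma lapF_int (P : ℝ → ℝ) (G : ℝ → ℂ) (K : ℝ) (ν : ℕ) (hPc : Continuous P) (hGc : Continuous G)
    (hP : ∀ y, 0 ≤ y → y ^ 2 ≤ P y) (hG : ∀ y, 0 ≤ y → ‖G y‖ ≤ K * Real.exp (ν * y))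
    (μ : ℕ) (x : ℝ) (hx : 0 < x) : IntegrableOn (lapF P G μ x) (Set.Ioi 0) := by
  refine Integrable.mono' (gauss_int (μ.factorial * (2 / x) ^ μ * K * Real.exp (ν ^ 2 / x)) x hx)
    (lapF_cont P G hPc hGc μ x).aestronglyMeasurable ?_
  refine (ae_restrict_mem measurableSet_Ioi).mono fun y hy => ?_
  have hy : 0 ≤ y := le_of_lt hy
  rw [lapF_norm _ _ _ _ _ ((sq_nonneg y).trans (hP y hy))]
  exact lap_bound P G K ν hP hG μ x hx y hy

def lapW (P : ℝ → ℝ) (G : ℝ → ℂ) (μ : ℕ) (x : ℝ) : ℂ := ∫ y in Set.Ioi (0 : ℝ), lapF P G μ x y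

lemma lapW_deriv (P : ℝ → ℝ) (G : ℝ → ℂ) (K : ℝ) (ν : ℕ) (hPc : Continuous P) (hGc : Continuous G)
    (hP : ∀ y, 0 ≤ y → y ^ 2 ≤ P y) (hG : ∀ y, 0 ≤ y → ‖G y‖ ≤ K * Real.exp (ν * y))
    (μ : ℕ) (x : ℝ) (hx : 0 < x) : HasDerivAt (lapW P G μ) (lapW P G (μ + 1) x) x := by
  have hx2 : 0 < x / 2 := by positivity
  refine (hasDerivAt_integral_of_dominated_loc_of_deriv_le (F := lapF P G μ)
    (F' := lapF P G (μ + 1)) (s := Set.Ioi (x / 2))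
    (bound := fun y => ((μ + 1).factorial * (2 / (x / 2)) ^ (μ + 1) * K *
      Real.exp (ν ^ 2 / (x / 2))) * Real.exp (-(x / 2 / 4) * y ^ 2))
    (Ioi_mem_nhds (by linarith)) ?_ ?_ ?_ ?_ ?_ ?_).2
  · exact Filter.Eventually.of_forall fun x => (lapF_cont P G hPc hGc μ x).aestronglyMeasurable
  · exact lapF_int P G K ν hPc hGc hP hG μ x hx
  · exact (lapF_cont P G hPc hGc _ x).aestronglyMeasurable
  · refine (ae_restrict_mem measurableSet_Ioi).mono fun y hy z hz => ?_
    have hy : 0 ≤ y := le_of_lt hy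
    have hP0 := (sq_nonneg y).trans (hP y hy)
    rw [lapF_norm _ _ _ _ _ hP0]
    refine le_trans ?_ (lap_bound P G K ν hP hG (μ + 1) (x / 2) hx2 y hy)
    have : x / 2 ≤ z := le_of_lt hz
    gcongr
  · exact gauss_int _ _ hx2
  · refine Filter.Eventually.of_forall fun y z _ => ?_
    unfold lapF
    refine HasDerivAt.mul_const ?_ (G y)
    refine HasDerivAt.ofReal_comp ?_
    have h1 : HasDerivAt (fun z : ℝ => -(z * P y)) (-(1 * P y)) z :=
      ((hasDerivAt_id z).mul_const (P y)).neg
    have h2 := (h1.exp).const_mul ((-(P y)) ^ μ)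
    refine h2.congr_deriv ?_
    rw [pow_succ]
    ring

lemma lapW_bound (P : ℝ → ℝ) (G : ℝ → ℂ) (K : ℝ) (ν : ℕ)
    (hP : ∀ y, 0 ≤ y → y ^ 2 ≤ P y) (hG : ∀ y, 0 ≤ y → ‖G y‖ ≤ K * Real.exp (ν * y))
    (μ : ℕ) : ∃ C : ℝ, 0 ≤ C ∧ ∀ x : ℝ, 1 ≤ x → ‖lapW P G μ x‖ ≤ C * x ^ (-(μ : ℝ) - 1 / 2) := by
  have hK : 0 ≤ K := by
    have := (norm_nonneg _).trans (hG 0 le_rfl)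
    simpa using this
  refine ⟨μ.factorial * 2 ^ μ * K * Real.exp (ν ^ 2) * √(4 * Real.pi) / 2, by positivity,
    fun x hx => ?_⟩
  have hx0 : 0 < x := by linarith
  have h1 : ‖lapW P G μ x‖ ≤ ∫ y in Set.Ioi (0 : ℝ),
      (μ.factorial * (2 / x) ^ μ * K * Real.exp (ν ^ 2 / x)) * Real.exp (-(x / 4) * y ^ 2) := by
    refine norm_integral_le_of_norm_le (gauss_int _ _ hx0) ?_
    refine (ae_restrict_mem measurableSet_Ioi).mono fun y hy => ?_
    have hy : 0 ≤ y := le_of_lt hy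
    rw [lapF_norm _ _ _ _ _ ((sq_nonneg y).trans (hP y hy))]
    exact lap_bound P G K ν hP hG μ x hx0 y hy
  rw [integral_const_mul, integral_gaussian_Ioi] at h1
  have h2 : √(Real.pi / (x / 4)) = √(4 * Real.pi) * x ^ (-(1 / 2) : ℝ) := by
    rw [show Real.pi / (x / 4) = (4 * Real.pi) / x by field_simp, Real.sqrt_div (by positivity),
      Real.sqrt_eq_rpow x, Real.rpow_neg hx0.le]
    rfl
  have h3 : x ^ (-(μ : ℝ) - 1 / 2) = (x ^ μ)⁻¹ * x ^ (-(1 / 2) : ℝ) := by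
    rw [sub_eq_add_neg, Real.rpow_add hx0, Real.rpow_neg hx0.le, Real.rpow_natCast]
  have h4 : Real.exp (ν ^ 2 / x) ≤ Real.exp (ν ^ 2) :=
    Real.exp_le_exp.mpr (div_le_self (by positivity) hx)
  refine h1.trans ?_
  rw [h2, h3, div_pow]
  calc _ ≤ (μ.factorial * (2 ^ μ / x ^ μ) * K * Real.exp (ν ^ 2)) *
        (√(4 * Real.pi) * x ^ (-(1 / 2) : ℝ) / 2) := by gcongr
    _ = _ := by field_simp

lemma lap_iter (P : ℝ → ℝ) (G : ℝ → ℂ) (K : ℝ) (ν : ℕ) (hPc : Continuous P) (hGc : Continuous G)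
    (hP : ∀ y, 0 ≤ y → y ^ 2 ≤ P y) (hG : ∀ y, 0 ≤ y → ‖G y‖ ≤ K * Real.exp (ν * y)) (c : ℂ)
    (μ : ℕ) : Set.EqOn (iteratedDerivWithin μ (fun x => c * lapW P G 0 x) (Set.Ioi 0))
      (fun x => c * lapW P G μ x) (Set.Ioi 0) := by
  induction μ with
  | zero => intro x _; simp
  | succ n ih =>
    intro x hx
    rw [iteratedDerivWithin_succ, derivWithin_congr ih (ih hx)]
    exact ((lapW_deriv P G K ν hPc hGc hP hG n x hx).const_mul c).hasDerivWithinAt.derivWithin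
      (isOpen_Ioi.uniqueDiffWithinAt hx)

lemma lap_smooth (P : ℝ → ℝ) (G : ℝ → ℂ) (K : ℝ) (ν : ℕ) (hPc : Continuous P) (hGc : Continuous G)
    (hP : ∀ y, 0 ≤ y → y ^ 2 ≤ P y) (hG : ∀ y, 0 ≤ y → ‖G y‖ ≤ K * Real.exp (ν * y)) (c : ℂ) :
    ContDiffOn ℝ (⊤ : ℕ∞) (fun x => c * lapW P G 0 x) (Set.Ioi 0) := by
  apply contDiffOn_of_differentiableOn_deriv
  intro m _
  refine DifferentiableOn.congr ?_ (lap_iter P G K ν hPc hGc hP hG c m)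
  intro x hx
  exact ((lapW_deriv P G K ν hPc hGc hP hG m x hx).const_mul c).differentiableAt.differentiableWithinAt

end Laplace

section Contour

/-- The exponent along the steepest descent path. -/
def pp (y : ℝ) : ℝ := Real.sinh y ^ 2 / Real.cosh y

lemma pp_cont : Continuous pp := by
  unfold pp
  exact (Real.continuous_sinh.pow 2).div Real.continuous_cosh fun x => (Real.cosh_pos x).ne'

lemma pp_ge (y : ℝ) : y ^ 2 / 2 ≤ pp y := by
  have h1 : 1 + y ^ 2 / 2 ≤ Real.cosh y := by
    have h := Real.cosh_two_mul (y / 2)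
    rw [Real.cosh_sq, show 2 * (y / 2) = y by ring] at h
    have h2 : (y / 2) ^ 2 ≤ Real.sinh (y / 2) ^ 2 := by
      rw [sq_le_sq, Real.abs_sinh]
      exact Real.self_le_sinh_iff.mpr (abs_nonneg _)
    nlinarith
  have hc : 0 < Real.cosh y := Real.cosh_pos y
  rw [pp, le_div_iff₀ hc]
  have := Real.cosh_sq y
  nlinarith [sq_nonneg y]

lemma pp_le_sinh (y : ℝ) (hy : 0 ≤ y) : pp y ≤ Real.sinh y := by
  have hc : 0 < Real.cosh y := Real.cosh_pos y
  rw [pp, div_le_iff₀ hc]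
  nlinarith [Real.sinh_nonneg_iff.mpr hy, Real.sinh_lt_cosh y]

/-- The two exponentials. -/
def ex (ν : ℕ) (z : ℂ) : ℂ :=
  Complex.exp (-(Complex.I * ν * z)) + (-1) ^ ν * Complex.exp (Complex.I * ν * z)

def bf (ξ : ℝ) (ν : ℕ) (z : ℂ) : ℂ := Complex.exp (Complex.I * ξ * Complex.sin z) * ex ν z

lemma ex_diff (ν : ℕ) : Differentiable ℂ (ex ν) := by
  unfold ex; fun_prop

lemma bf_diff (ξ : ℝ) (ν : ℕ) : Differentiable ℂ (bf ξ ν) := by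
  unfold bf
  have := ex_diff ν
  have := Complex.differentiable_sin
  fun_prop

lemma ex_norm (ν : ℕ) (a b : ℝ) (hb : 0 ≤ b) :
    ‖ex ν (a + b * Complex.I)‖ ≤ 2 * Real.exp (ν * b) := by
  unfold ex
  refine (norm_add_le _ _).trans ?_
  rw [norm_mul, norm_pow, norm_neg, norm_one, one_pow, one_mul, Complex.norm_exp, Complex.norm_exp]
  have h1 : (-(Complex.I * ν * (a + b * Complex.I))).re = ν * b := by
    simp
  have h2 : (Complex.I * ν * (a + b * Complex.I)).re = -(ν * b) := by
    simp
  rw [h1, h2]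
  have h3 : (0 : ℝ) ≤ ν * b := by positivity
  have : Real.exp (-(ν * b)) ≤ Real.exp (ν * b) := Real.exp_le_exp.mpr (by linarith)
  linarith

lemma bf_norm (ξ : ℝ) (ν : ℕ) (a b : ℝ) (hb : 0 ≤ b) :
    ‖bf ξ ν (a + b * Complex.I)‖ ≤
      Real.exp (-(ξ * (Real.cos a * Real.sinh b))) * (2 * Real.exp (ν * b)) := by
  unfold bf
  rw [norm_mul]
  refine mul_le_mul (le_of_eq ?_) (ex_norm ν a b hb) (norm_nonneg _) (Real.exp_pos _).le
  rw [Complex.norm_exp, Complex.sin_add_mul_I, ← Complex.ofReal_sin, ← Complex.ofReal_cos,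
    ← Complex.ofReal_cosh, ← Complex.ofReal_sinh]
  congr 1
  simp [-Complex.ofReal_sin, -Complex.ofReal_cos, -Complex.ofReal_cosh, -Complex.ofReal_sinh]

/-- The steepest descent path. -/
def th (y : ℝ) : ℂ := ((Real.pi / 2 - Real.arctan (Real.sinh y) : ℝ) : ℂ) + y * Complex.I

lemma sqrt_sinh (y : ℝ) : √(1 + Real.sinh y ^ 2) = Real.cosh y := by
  rw [add_comm, ← Real.cosh_sq, Real.sqrt_sq (Real.cosh_pos y).le]

lemma sin_th (y : ℝ) : Complex.sin (th y) = 1 + Complex.I * pp y := by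
  have hc : (Real.cosh y : ℂ) ≠ 0 := by exact_mod_cast (Real.cosh_pos y).ne'
  rw [th, Complex.sin_add_mul_I, ← Complex.ofReal_sin, ← Complex.ofReal_cos,
    ← Complex.ofReal_cosh, ← Complex.ofReal_sinh, Real.sin_pi_div_two_sub, Real.cos_pi_div_two_sub,
    Real.cos_arctan, Real.sin_arctan, sqrt_sinh, pp]
  push_cast at hc ⊢
  field_simp

def thd (y : ℝ) : ℂ := Complex.I - ((1 / Real.cosh y : ℝ) : ℂ)

lemma th_deriv (y : ℝ) : HasDerivAt th (thd y) y := by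
  unfold th thd
  have h1 := ((Real.hasDerivAt_sinh y).arctan).const_sub (Real.pi / 2)
  have h2 := h1.ofReal_comp
  have h3 := (HasDerivAt.ofReal_comp (hasDerivAt_id y)).mul_const Complex.I
  refine (h2.add h3).congr_deriv ?_
  have hc := (Real.cosh_pos y).ne'
  rw [show (1 : ℝ) + Real.sinh y ^ 2 = Real.cosh y ^ 2 by rw [Real.cosh_sq]; ring,
    show 1 / Real.cosh y ^ 2 * Real.cosh y = 1 / Real.cosh y by field_simp]
  push_cast
  ring

lemma thd_cont : Continuous thd := by
  unfold thd
  have : Continuous fun y => 1 / Real.cosh y :=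
    continuous_const.div Real.continuous_cosh fun x => (Real.cosh_pos x).ne'
  fun_prop

lemma th_cont : Continuous th :=
  continuous_iff_continuousAt.mpr fun y => (th_deriv y).continuousAt

def GG (ν : ℕ) (y : ℝ) : ℂ := ex ν (th y) * thd y

lemma GG_cont (ν : ℕ) : Continuous (GG ν) :=
  ((ex_diff ν).continuous.comp th_cont).mul thd_cont

lemma GG_norm (ν : ℕ) (y : ℝ) (hy : 0 ≤ y) : ‖GG ν y‖ ≤ 4 * Real.exp (ν * y) := by
  rw [GG, norm_mul]
  have h1 : ‖ex ν (th y)‖ ≤ 2 * Real.exp (ν * y) := ex_norm ν _ y hy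
  have h2 : ‖thd y‖ ≤ 2 := by
    unfold thd
    refine (norm_sub_le _ _).trans ?_
    rw [Complex.norm_I, Complex.norm_real, Real.norm_of_nonneg (by
      have := Real.cosh_pos y; positivity)]
    have : 1 / Real.cosh y ≤ 1 := by
      rw [div_le_one (Real.cosh_pos y)]; exact Real.one_le_cosh y
    linarith
  calc _ ≤ 2 * Real.exp (ν * y) * 2 := by gcongr
    _ = _ := by ring

lemma bf_th (ξ : ℝ) (ν : ℕ) (y : ℝ) :
    bf ξ ν (th y) * thd y =
      Complex.exp (Complex.I * ξ) * lapF (fun y => Real.pi * pp y) (GG ν) 0 (ξ / Real.pi) y := by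
  unfold bf lapF GG
  rw [sin_th]
  have : Complex.exp (Complex.I * ξ * (1 + Complex.I * pp y)) =
      Complex.exp (Complex.I * ξ) * ((Real.exp (-(ξ * pp y)) : ℝ) : ℂ) := by
    rw [Complex.ofReal_exp, ← Complex.exp_add]
    congr 1
    push_cast
    linear_combination (ξ * pp y : ℂ) * Complex.I_mul_I
  rw [this, show ξ / Real.pi * (Real.pi * pp y) = ξ * pp y by field_simp, pow_zero, one_mul]
  ring

/-- The finite contour identity. -/
lemma contour (ξ : ℝ) (ν : ℕ) (Y : ℝ) :
    (∫ a in (0 : ℝ)..(Real.pi / 2), bf ξ ν a)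
      - (∫ t in (0 : ℝ)..Y, bf ξ ν (t * Complex.I) * Complex.I)
      + (∫ y in (0 : ℝ)..Y, bf ξ ν (th y) * thd y)
      = ∫ a in (0 : ℝ)..(Real.pi / 2 - Real.arctan (Real.sinh Y)),
          bf ξ ν (a + Y * Complex.I) := by
  obtain ⟨F, hF⟩ : ∃ F : ℂ → ℂ, ∀ z ∈ Metric.ball (0 : ℂ) (2 * Real.pi + |Y| + 1),
      HasDerivAt F (bf ξ ν z) z := (bf_diff ξ ν).differentiableOn.isExactOn_ball
  have hball : ∀ a b : ℝ, |a| ≤ 2 * Real.pi → |b| ≤ |Y| →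
      ((a : ℂ) + b * Complex.I) ∈ Metric.ball (0 : ℂ) (2 * Real.pi + |Y| + 1) := by
    intro a b ha hb
    rw [mem_ball_zero_iff]
    refine (norm_add_le _ _).trans_lt ?_
    rw [norm_mul, Complex.norm_I, Complex.norm_real, Complex.norm_real, Real.norm_eq_abs,
      Real.norm_eq_abs]
    linarith
  have hpi := Real.pi_pos
  have hcont : Continuous (bf ξ ν) := (bf_diff ξ ν).continuous
  have harc := Real.arctan_mem_Ioo
  have habs : ∀ t ∈ Set.uIcc 0 Y, |t| ≤ |Y| := by
    intro t ht
    have := Set.abs_sub_left_of_mem_uIcc ht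
    simpa using this
  have h1 : (∫ a in (0 : ℝ)..(Real.pi / 2), bf ξ ν a) = F ((Real.pi / 2 : ℝ) : ℂ) - F ((0 : ℝ) : ℂ) := by
    refine intervalIntegral.integral_eq_sub_of_hasDerivAt (f := fun a : ℝ => F a) ?_ ?_
    · intro a ha
      rw [Set.uIcc_of_le (by positivity)] at ha
      have := hF a (by
        have := hball a 0 (by rw [abs_of_nonneg ha.1]; linarith [ha.2]) (by simp)
        simpa using this)
      exact this.comp_ofReal
    · exact (by fun_prop : Continuous fun a : ℝ => bf ξ ν a).intervalIntegrable _ _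
  have h2 : (∫ t in (0 : ℝ)..Y, bf ξ ν (t * Complex.I) * Complex.I) =
      F (Y * Complex.I) - F ((0 : ℝ) * Complex.I) := by
    refine intervalIntegral.integral_eq_sub_of_hasDerivAt
      (f := fun t : ℝ => F (t * Complex.I)) ?_ ?_
    · intro t ht
      have h := hF (t * Complex.I) (by
        have := hball 0 t (by simp; linarith) (habs t ht)
        simpa using this)
      have h3 := (HasDerivAt.ofReal_comp (hasDerivAt_id t)).mul_const Complex.I
      have h4 := HasDerivAt.comp t h h3
      refine h4.congr_deriv ?_
      simp
    · exact (by fun_prop : Continuous fun t : ℝ =>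
        bf ξ ν (t * Complex.I) * Complex.I).intervalIntegrable _ _
  have h3 : (∫ y in (0 : ℝ)..Y, bf ξ ν (th y) * thd y) = F (th Y) - F (th 0) := by
    refine intervalIntegral.integral_eq_sub_of_hasDerivAt (f := fun t : ℝ => F (th t)) ?_ ?_
    · intro t ht
      have h := hF (th t) (by
        refine hball _ t ?_ (habs t ht)
        have := harc (Real.sinh t)
        rw [abs_le]
        constructor <;> linarith [this.1, this.2])
      exact HasDerivAt.comp t h (th_deriv t)
    · have := th_cont
      have := thd_cont
      exact (by fun_prop : Continuous fun t : ℝ => bf ξ ν (th t) * thd t).intervalIntegrable _ _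
  have h4 : (∫ a in (0 : ℝ)..(Real.pi / 2 - Real.arctan (Real.sinh Y)),
      bf ξ ν (a + Y * Complex.I)) = F (th Y) - F ((0 : ℝ) + Y * Complex.I) := by
    refine intervalIntegral.integral_eq_sub_of_hasDerivAt
      (f := fun a : ℝ => F (a + Y * Complex.I)) ?_ ?_
    · intro a ha
      have hh := harc (Real.sinh Y)
      rw [Set.uIcc_of_le (by linarith [hh.2])] at ha
      have h := hF (a + Y * Complex.I) (by
        refine hball a Y ?_ le_rfl
        rw [abs_of_nonneg ha.1]
        linarith [ha.2, hh.1])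
      have h5 := (HasDerivAt.ofReal_comp (hasDerivAt_id a)).add_const (Y * Complex.I)
      have h6 := HasDerivAt.comp a h h5
      refine h6.congr_deriv ?_
      simp
    · exact (by fun_prop : Continuous fun a : ℝ =>
        bf ξ ν (a + Y * Complex.I)).intervalIntegrable _ _
  rw [h1, h2, h3, h4]
  have h0 : th 0 = ((Real.pi / 2 : ℝ) : ℂ) := by simp [th]
  rw [h0]
  simp

lemma top_bound (ξ : ℝ) (hξ : 0 < ξ) (ν : ℕ) (Y : ℝ) (hY : 0 ≤ Y) :
    ‖∫ a in (0 : ℝ)..(Real.pi / 2 - Real.arctan (Real.sinh Y)), bf ξ ν (a + Y * Complex.I)‖ ≤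
      Real.exp (-(ξ * (Y ^ 2 / 2))) * (2 * Real.exp (ν * Y)) * Real.pi := by
  have hpi := Real.pi_pos
  have hh := Real.arctan_mem_Ioo (Real.sinh Y)
  have hs : 0 ≤ Real.sinh Y := Real.sinh_nonneg_iff.mpr hY
  have ha0 : 0 ≤ Real.arctan (Real.sinh Y) := Real.arctan_nonneg.mpr hs
  refine (intervalIntegral.norm_integral_le_of_norm_le_const
    (C := Real.exp (-(ξ * (Y ^ 2 / 2))) * (2 * Real.exp (ν * Y))) ?_).trans ?_
  · intro a ha
    rw [Set.uIoc_of_le (by linarith [hh.2])] at ha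
    refine (bf_norm ξ ν a Y hY).trans ?_
    gcongr
    refine (pp_ge Y).trans ?_
    have h1 : Real.cos (Real.pi / 2 - Real.arctan (Real.sinh Y)) ≤ Real.cos a :=
      Real.cos_le_cos_of_nonneg_of_le_pi ha.1.le (by linarith) ha.2
    rw [Real.cos_pi_div_two_sub, Real.sin_arctan, sqrt_sinh] at h1
    calc pp Y = Real.sinh Y / Real.cosh Y * Real.sinh Y := by rw [pp]; ring
      _ ≤ _ := by gcongr
  · gcongr
    rw [sub_zero, abs_of_nonneg (by linarith [hh.2])]
    linarith

lemma top_tendsto (ξ : ℝ) (hξ : 0 < ξ) (ν : ℕ) :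
    Filter.Tendsto (fun Y : ℝ => ∫ a in (0 : ℝ)..(Real.pi / 2 - Real.arctan (Real.sinh Y)),
      bf ξ ν (a + Y * Complex.I)) Filter.atTop (nhds 0) := by
  have h1 : Filter.Tendsto (fun Y : ℝ => (2 * Real.pi) * Real.exp (-(Y * (ξ / 2 * Y - ν))))
      Filter.atTop (nhds ((2 * Real.pi) * 0)) := by
    refine Filter.Tendsto.const_mul _ ?_
    refine Real.tendsto_exp_neg_atTop_nhds_zero.comp ?_
    refine Filter.Tendsto.atTop_mul_atTop₀ Filter.tendsto_id ?_
    refine Filter.tendsto_atTop_add_const_right _ _ ?_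
    exact Filter.Tendsto.const_mul_atTop (by positivity) Filter.tendsto_id
  rw [mul_zero] at h1
  refine squeeze_zero_norm' ?_ h1
  filter_upwards [Filter.eventually_ge_atTop 0] with Y hY
  refine (top_bound ξ hξ ν Y hY).trans (le_of_eq ?_)
  rw [show -(Y * (ξ / 2 * Y - ν)) = -(ξ * (Y ^ 2 / 2)) + ν * Y by ring, Real.exp_add]
  ring

lemma P_ge (y : ℝ) : y ^ 2 ≤ Real.pi * pp y := by
  have h1 := pp_ge y
  have h2 := Real.pi_gt_three
  nlinarith [sq_nonneg y]

lemma vert_int (ξ : ℝ) (hξ : 0 < ξ) (ν : ℕ) :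
    IntegrableOn (fun t : ℝ => bf ξ ν (t * Complex.I) * Complex.I) (Set.Ioi 0) := by
  have hcont : Continuous (bf ξ ν) := (bf_diff ξ ν).continuous
  refine Integrable.mono' (gauss_int (Nat.factorial 0 * (2 / (ξ / Real.pi)) ^ 0 * 2 *
      Real.exp (ν ^ 2 / (ξ / Real.pi))) (ξ / Real.pi) (by positivity))
    (by fun_prop : Continuous fun t : ℝ =>
      bf ξ ν (t * Complex.I) * Complex.I).aestronglyMeasurable
    ((ae_restrict_mem measurableSet_Ioi).mono fun y hy => ?_)
  have hy : 0 ≤ y := le_of_lt hy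
  have h1 := bf_norm ξ ν 0 y hy
  have h2 := lap_bound (fun y => Real.pi * pp y) (fun y => ((2 * Real.exp (ν * y) : ℝ) : ℂ)) 2 ν
    (fun y _ => P_ge y) (fun y _ => by
      rw [Complex.norm_real, Real.norm_of_nonneg (by positivity)]) 0 (ξ / Real.pi)
    (by positivity) y hy
  rw [norm_mul, Complex.norm_I, mul_one]
  refine le_trans ?_ h2
  rw [Complex.ofReal_zero, zero_add] at h1
  refine h1.trans ?_
  rw [Complex.norm_real, Real.norm_of_nonneg (by positivity), pow_zero, one_mul,
    show ξ / Real.pi * (Real.pi * pp y) = ξ * pp y by field_simp, Real.cos_zero, one_mul]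
  gcongr
  exact pp_le_sinh y hy

lemma main_id (ξ : ℝ) (hξ : 0 < ξ) (ν : ℕ) :
    (∫ a in (0 : ℝ)..(Real.pi / 2), bf ξ ν a)
      - (∫ t in Set.Ioi (0 : ℝ), bf ξ ν (t * Complex.I) * Complex.I)
      = - (Complex.exp (Complex.I * ξ) *
        lapW (fun y => Real.pi * pp y) (GG ν) 0 (ξ / Real.pi)) := by
  have hW : IntegrableOn (fun y => bf ξ ν (th y) * thd y) (Set.Ioi 0) := by
    simp_rw [bf_th]
    exact (lapF_int (fun y => Real.pi * pp y) (GG ν) 4 ν (pp_cont.const_mul _) (GG_cont ν)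
      (fun y _ => P_ge y) (GG_norm ν) 0 (ξ / Real.pi) (by positivity)).const_mul _
  have t1 := intervalIntegral_tendsto_integral_Ioi 0 hW Filter.tendsto_id
  have t2 := intervalIntegral_tendsto_integral_Ioi 0 (vert_int ξ hξ ν) Filter.tendsto_id
  have t3 := (t2.const_sub (∫ a in (0 : ℝ)..(Real.pi / 2), bf ξ ν a)).add t1
  simp only [id] at t3
  simp_rw [contour] at t3
  have := tendsto_nhds_unique t3 (top_tendsto ξ hξ ν)
  rw [eq_neg_of_add_eq_zero_left this]
  simp_rw [bf_th]
  rw [integral_const_mul]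
  rfl

lemma fold (ξ : ℝ) (ν : ℕ) :
    (∫ a in (0 : ℝ)..(Real.pi / 2), bf ξ ν a) =
      ∫ a in (0 : ℝ)..Real.pi, Complex.exp (Complex.I * (ξ * Real.sin a - ν * a : ℝ)) := by
  set g : ℝ → ℂ := fun a => Complex.exp (Complex.I * (ξ * Real.sin a - ν * a : ℝ)) with hg
  have hgc : Continuous g := by rw [hg]; fun_prop
  have h1 : (∫ a in (Real.pi / 2)..Real.pi, g a) = ∫ a in (0 : ℝ)..(Real.pi / 2), g (Real.pi - a) := by
    rw [intervalIntegral.integral_comp_sub_left]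
    congr 1 <;> ring
  rw [← intervalIntegral.integral_add_adjacent_intervals (hgc.intervalIntegrable 0 (Real.pi / 2))
    (hgc.intervalIntegrable _ _), h1, ← intervalIntegral.integral_add
    (hgc.intervalIntegrable _ _)
    ((by fun_prop : Continuous fun a => g (Real.pi - a)).intervalIntegrable _ _)]
  congr 1
  ext a
  rw [hg]
  simp only [Real.sin_pi_sub]
  unfold bf ex
  rw [mul_add]
  have hν : ((-1 : ℂ)) ^ ν = Complex.exp (-(Complex.I * ν * Real.pi)) := by
    rw [show -(Complex.I * ν * Real.pi) = ν * (-(Real.pi * Complex.I)) by ring, Complex.exp_nat_mul,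
      Complex.exp_neg, Complex.exp_pi_mul_I]
    norm_num
  rw [hν, ← Complex.exp_add, ← Complex.exp_add, ← Complex.exp_add]
  congr 1
  · congr 1; push_cast; ring
  · congr 1; push_cast; ring

lemma vert_eq (ξ : ℝ) (ν : ℕ) :
    (∫ t in Set.Ioi (0 : ℝ), bf ξ ν (t * Complex.I) * Complex.I) =
      ((∫ t in Set.Ioi (0 : ℝ),
      (Real.exp (ν * t) + (-1 : ℝ) ^ ν * Real.exp (-(ν * t))) * Real.exp (-(ξ * Real.sinh t)) : ℝ) : ℂ)
        * Complex.I := by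
  rw [integral_mul_const, ← integral_complex_ofReal]
  congr 2
  ext t
  unfold bf ex
  rw [Complex.sin_mul_I]
  push_cast
  rw [mul_comm]
  congr 2
  · congr 1; linear_combination (-(ν * t) : ℂ) * Complex.I_mul_I
  · congr 2; linear_combination ((ν * t) : ℂ) * Complex.I_mul_I
  · linear_combination ((ξ * Complex.sinh t) : ℂ) * Complex.I_mul_I

lemma hankel (ξ : ℝ) (hξ : 0 < ξ) (ν : ℕ) :
    (besselJ ν ξ : ℂ) + besselY ν ξ * Complex.I =
      -(1 / Real.pi) * (Complex.exp (Complex.I * ξ) *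
        lapW (fun y => Real.pi * pp y) (GG ν) 0 (ξ / Real.pi)) := by
  have h := main_id ξ hξ ν
  rw [fold, vert_eq] at h
  have hA : (∫ a in (0 : ℝ)..Real.pi, Complex.exp (Complex.I * (ξ * Real.sin a - ν * a : ℝ))) =
      ((∫ θ in (0 : ℝ)..Real.pi, Real.cos (ν * θ - ξ * Real.sin θ) : ℝ) : ℂ) +
      ((∫ θ in (0 : ℝ)..Real.pi, Real.sin (ξ * Real.sin θ - ν * θ) : ℝ) : ℂ) * Complex.I := by
    rw [← intervalIntegral.integral_ofReal, ← intervalIntegral.integral_ofReal,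
      ← intervalIntegral.integral_mul_const, ← intervalIntegral.integral_add]
    · congr 1
      ext a
      rw [mul_comm, Complex.exp_mul_I, ← Complex.ofReal_cos, ← Complex.ofReal_sin,
        ← Real.cos_neg (ν * a - ξ * Real.sin a), neg_sub]
    · exact (by fun_prop : Continuous _).intervalIntegrable _ _
    · exact (by fun_prop : Continuous _).intervalIntegrable _ _
  rw [hA] at h
  unfold besselJ besselY
  push_cast at h ⊢
  linear_combination (1 / Real.pi : ℂ) * h

end Contour

theorem besselJ_besselY_oscillating (ν : ℕ) :
    ∃ vJ vY : ℝ → ℂ,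
      ContDiffOn ℝ (⊤ : ℕ∞) vJ (Set.Ioi 0) ∧ ContDiffOn ℝ (⊤ : ℕ∞) vY (Set.Ioi 0) ∧
      (∀ ξ : ℝ, 0 < ξ →
        besselJ ν ξ = 2 * (e (ξ / (2 * Real.pi)) * vJ (ξ / Real.pi)).re ∧
        besselY ν ξ = 2 * (e (ξ / (2 * Real.pi)) * vY (ξ / Real.pi)).re) ∧
      (∀ μ : ℕ, ∃ C : ℝ, ∀ ξ : ℝ, 1 ≤ ξ →
        ‖iteratedDerivWithin μ vJ (Set.Ioi 0) ξ‖ ≤ C * ξ ^ (-(μ : ℝ) - 1 / 2) ∧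
        ‖iteratedDerivWithin μ vY (Set.Ioi 0) ξ‖ ≤ C * ξ ^ (-(μ : ℝ) - 1 / 2)) := by
  have hPc : Continuous fun y => Real.pi * pp y := pp_cont.const_mul _
  have hP : ∀ y, 0 ≤ y → y ^ 2 ≤ Real.pi * pp y := fun y _ => P_ge y
  set W := lapW (fun y => Real.pi * pp y) (GG ν) with hW
  set c : ℂ := ((-(1 / (2 * Real.pi)) : ℝ) : ℂ) with hc
  refine ⟨fun x => c * W 0 x, fun x => (-Complex.I * c) * W 0 x,
    lap_smooth _ _ 4 ν hPc (GG_cont ν) hP (GG_norm ν) _,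
    lap_smooth _ _ 4 ν hPc (GG_cont ν) hP (GG_norm ν) _, ?_, ?_⟩
  · intro ξ hξ
    have h := hankel ξ hξ ν
    have he : e (ξ / (2 * Real.pi)) = Complex.exp (Complex.I * ξ) := by
      unfold e
      congr 1
      have : (Real.pi : ℂ) ≠ 0 := by exact_mod_cast Real.pi_pos.ne'
      push_cast
      field_simp
    have hpi : (Real.pi : ℂ) ≠ 0 := by exact_mod_cast Real.pi_pos.ne'
    have h1 : e (ξ / (2 * Real.pi)) * (c * W 0 (ξ / Real.pi)) =
        (((1 / 2 : ℝ)) : ℂ) * ((besselJ ν ξ : ℂ) + besselY ν ξ * Complex.I) := by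
      rw [h, he, hc, hW]
      push_cast
      field_simp
    have h2 : e (ξ / (2 * Real.pi)) * ((-Complex.I * c) * W 0 (ξ / Real.pi)) =
        (((1 / 2 : ℝ)) : ℂ) * ((besselY ν ξ : ℂ) - besselJ ν ξ * Complex.I) := by
      push_cast at h1 ⊢
      linear_combination (-Complex.I) * h1 - (1 / 2 * besselY ν ξ : ℂ) * Complex.I_mul_I
    simp only [h1, h2, Complex.re_ofReal_mul]
    simp
  · intro μ
    obtain ⟨C, hC0, hC⟩ := lapW_bound _ (GG ν) 4 ν hP (GG_norm ν) μ
    refine ⟨‖c‖ * C, fun x hx => ?_⟩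
    have hx0 : x ∈ Set.Ioi (0 : ℝ) := lt_of_lt_of_le one_pos hx
    rw [lap_iter _ _ 4 ν hPc (GG_cont ν) hP (GG_norm ν) _ μ hx0,
      lap_iter _ _ 4 ν hPc (GG_cont ν) hP (GG_norm ν) _ μ hx0]
    simp only [norm_mul, norm_neg, Complex.norm_I, one_mul, mul_assoc]
    exact ⟨mul_le_mul_of_nonneg_left (hC x hx) (norm_nonneg _),
      mul_le_mul_of_nonneg_left (hC x hx) (norm_nonneg _)⟩
end
end

section
/- Define v_Y : (0,∞) → ℂ by the (conditionally convergent improper) integral v_Y(ξ) := −(2/π)·∫_0^∞ e(y²)·(y² + ξ)^{−1/2} dy. Then v_Y is smooth on (0,∞), for all ξ > 0 one has Y_0(ξ) = 2·Re( e(ξ/(2π))·v_Y(ξ/π) ), and for every integer μ ≥ 0 there is a constant C_μ with |v_Y^{(μ)}(ξ)| ≤ C_μ·ξ^{−μ−1/2} for all ξ ≥ 1. -/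
noncomputable section

open Filter MeasureTheory

/-- The Bessel function `Y₀(ξ) = -(2/π) ∫_0^∞ cos(ξ cosh t) dt` (as an improper integral). -/
def Y₀ (ξ : ℝ) : ℝ :=
  -(2 / Real.pi) *
    limUnder atTop (fun T : ℝ => ∫ t in (0 : ℝ)..T, Real.cos (ξ * Real.cosh t))

/-- `v_Y(ξ) = -(2/π) ∫_0^∞ e(y²) (y² + ξ)^{-1/2} dy` (as an improper integral). -/
def vY (ξ : ℝ) : ℂ :=
  -(2 / Real.pi) *
    limUnder atTop (fun T : ℝ => ∫ y in (0 : ℝ)..T, e (y ^ 2) / Real.sqrt (y ^ 2 + ξ))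


lemma e_cont : Continuous e := by unfold e; fun_prop

lemma e_norm (q : ℝ) : ‖e q‖ = 1 := by
  unfold e
  have : (2 * Real.pi * Complex.I * q : ℂ) = ((2 * Real.pi * q : ℝ) : ℂ) * Complex.I := by
    push_cast; ring
  rw [this, Complex.norm_exp_ofReal_mul_I]

/-- Fresnel primitive. -/
def Fr (y : ℝ) : ℂ := ∫ u in (0 : ℝ)..y, e (u ^ 2)

lemma Fr_deriv (y : ℝ) : HasDerivAt Fr (e (y ^ 2)) y := by
  have hc : Continuous fun u : ℝ => e (u ^ 2) := e_cont.comp (by fun_prop)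
  exact intervalIntegral.integral_hasDerivAt_right (hc.intervalIntegrable _ _)
    (hc.stronglyMeasurableAtFilter _ _) hc.continuousAt

lemma Fr_cont : Continuous Fr :=
  continuous_iff_continuousAt.2 fun y => (Fr_deriv y).continuousAt

lemma e_sq_deriv (u : ℝ) :
    HasDerivAt (fun u : ℝ => e (u ^ 2)) (e (u ^ 2) * (4 * Real.pi * Complex.I * u)) u := by
  unfold e
  have h1 : HasDerivAt (fun u : ℝ => ((u ^ 2 : ℝ) : ℂ)) ((2 * u : ℝ) : ℂ) u := by
    have := (hasDerivAt_pow 2 u).ofReal_comp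
    simpa using this
  have h2 := (h1.const_mul (2 * Real.pi * Complex.I : ℂ)).cexp
  convert h2 using 1
  push_cast; ring

lemma Fr_bdd : ∃ A : ℝ, 0 ≤ A ∧ ∀ y, 0 ≤ y → ‖Fr y‖ ≤ A := by
  have hpi : (Real.pi : ℂ) ≠ 0 := by exact_mod_cast Real.pi_ne_zero
  have hc : Continuous fun u : ℝ => e (u ^ 2) := e_cont.comp (by fun_prop)
  have small : ∀ y : ℝ, 0 ≤ y → y ≤ 1 → ‖Fr y‖ ≤ 1 := by
    intro y h0 h1
    have := intervalIntegral.norm_integral_le_of_norm_le_const (a := 0) (b := y)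
      (f := fun u : ℝ => e (u ^ 2)) (C := 1) (fun x _ => (e_norm _).le)
    simp only [sub_zero, abs_of_nonneg h0] at this
    unfold Fr; linarith
  have nK : ‖(4 * Real.pi * Complex.I : ℂ)‖ = 4 * Real.pi := by
    simp [abs_of_pos Real.pi_pos]
  have hK : (1 : ℝ) ≤ 4 * Real.pi := by nlinarith [Real.pi_gt_three]
  have hK0 : (4 * Real.pi * Complex.I : ℂ) ≠ 0 := by simp [hpi]
  refine ⟨4, by norm_num, fun y hy => ?_⟩
  rcases le_total y 1 with h | h
  · linarith [small y hy h]
  set K : ℂ := 4 * Real.pi * Complex.I with hKdef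
  have pos : ∀ u ∈ Set.uIcc 1 y, 0 < u := by
    intro u hu; rw [Set.uIcc_of_le h] at hu; linarith [hu.1]
  have hd : ∀ u ∈ Set.uIcc 1 y,
      HasDerivAt (fun u : ℝ => Fr u - e (u ^ 2) / (K * u)) (e (u ^ 2) / (K * u ^ 2)) u := by
    intro u hu
    have hu0 : (u : ℂ) ≠ 0 := by exact_mod_cast (pos u hu).ne'
    have h1 : HasDerivAt (fun u : ℝ => K * (u : ℂ)) (K * 1) u :=
      (HasDerivAt.ofReal_comp (hasDerivAt_id u)).const_mul K
    have h2 := (Fr_deriv u).sub ((e_sq_deriv u).div h1 (mul_ne_zero hK0 hu0))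
    refine HasDerivAt.congr_deriv h2 ?_
    rw [← hKdef]
    field_simp
    ring
  have hcont : ContinuousOn (fun u : ℝ => e (u ^ 2) / (K * u ^ 2)) (Set.uIcc 1 y) := by
    apply ContinuousOn.div hc.continuousOn (by fun_prop)
    intro u hu
    have hu0 : (u : ℂ) ≠ 0 := by exact_mod_cast (pos u hu).ne'
    positivity
  have hI := intervalIntegral.integral_eq_sub_of_hasDerivAt hd hcont.intervalIntegrable
  have hd2 : ∀ u ∈ Set.uIcc 1 y, HasDerivAt (fun u : ℝ => -u⁻¹) ((u ^ 2)⁻¹) u := by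
    intro u hu
    have := (hasDerivAt_inv (pos u hu).ne').neg
    refine HasDerivAt.congr_deriv this ?_
    simp
  have hcont2 : ContinuousOn (fun u : ℝ => (u ^ 2)⁻¹) (Set.uIcc 1 y) := by
    apply ContinuousOn.inv₀ (by fun_prop)
    intro u hu
    have := pos u hu
    positivity
  have hI2 := intervalIntegral.integral_eq_sub_of_hasDerivAt hd2 hcont2.intervalIntegrable
  have hle : ‖∫ u in (1 : ℝ)..y, e (u ^ 2) / (K * u ^ 2)‖ ≤ ∫ u in (1 : ℝ)..y, (u ^ 2)⁻¹ := by
    apply intervalIntegral.norm_integral_le_of_norm_le h _ hcont2.intervalIntegrable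
    refine Filter.Eventually.of_forall fun u hu => ?_
    have hu0 : 0 < u := by linarith [hu.1]
    rw [norm_div, e_norm, norm_mul, nK, norm_pow, Complex.norm_real, Real.norm_eq_abs, sq_abs,
      one_div]
    apply inv_anti₀ (by positivity)
    nlinarith [sq_nonneg u]
  have hb : ∀ u : ℝ, 1 ≤ u → ‖e (u ^ 2) / (K * u)‖ ≤ 1 := by
    intro u hu
    rw [norm_div, e_norm, norm_mul, nK, Complex.norm_real, Real.norm_eq_abs,
      abs_of_pos (by linarith)]
    rw [div_le_one (by positivity)]
    nlinarith
  rw [hI, hI2] at hle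
  have hy' : 0 < y⁻¹ := by positivity
  have e1 : Fr y = (Fr y - e (y ^ 2) / (K * y) - (Fr 1 - e (1 ^ 2) / (K * (1 : ℝ))))
      + e (y ^ 2) / (K * y) + Fr 1 - e (1 ^ 2) / (K * (1 : ℝ)) := by ring
  rw [e1]
  refine (norm_sub_le _ _).trans ?_
  have n1 := norm_add_le (Fr y - e (y ^ 2) / (K * y) - (Fr 1 - e (1 ^ 2) / (K * (1 : ℝ)))
      + e (y ^ 2) / (K * y)) (Fr 1)
  have n2 := norm_add_le (Fr y - e (y ^ 2) / (K * y) - (Fr 1 - e (1 ^ 2) / (K * (1 : ℝ))))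
      (e (y ^ 2) / (K * y))
  have t1 := hb y h
  have t2 := hb 1 le_rfl
  have t3 := small 1 zero_le_one le_rfl
  have hle' := hle
  rw [inv_one] at hle'
  linarith

lemma ker_deriv (s ξ : ℝ) (hξ : 0 < ξ) (hs : 1 < s) (y : ℝ) :
    HasDerivAt (fun y : ℝ => -(2 * (s - 1))⁻¹ * (y ^ 2 + ξ) ^ (1 - s)) (y * (y ^ 2 + ξ) ^ (-s)) y := by
  have hp : 0 < y ^ 2 + ξ := by positivity
  have h1 : HasDerivAt (fun y : ℝ => y ^ 2 + ξ) (2 * y) y := by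
    simpa using (hasDerivAt_pow 2 y).add_const ξ
  have h2 := (h1.rpow_const (p := 1 - s) (Or.inl hp.ne')).const_mul (-(2 * (s - 1))⁻¹)
  refine HasDerivAt.congr_deriv h2 ?_
  have : s - 1 ≠ 0 := by linarith
  rw [show 1 - s - 1 = -s by ring]
  field_simp
  ring

lemma ker_tendsto (s ξ : ℝ) (hs : 1 < s) :
    Tendsto (fun y : ℝ => -(2 * (s - 1))⁻¹ * (y ^ 2 + ξ) ^ (1 - s)) atTop (nhds 0) := by
  have h1 : Tendsto (fun y : ℝ => y ^ 2 + ξ) atTop atTop :=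
    tendsto_atTop_add_const_right _ _ (tendsto_pow_atTop (by norm_num))
  have h2 := (tendsto_rpow_neg_atTop (y := s - 1) (by linarith)).comp h1
  have h3 := h2.const_mul (-(2 * (s - 1))⁻¹)
  simpa [Function.comp_def] using h3

lemma ker_int (s ξ : ℝ) (hξ : 0 < ξ) (hs : 1 < s) :
    IntegrableOn (fun y : ℝ => y * (y ^ 2 + ξ) ^ (-s)) (Set.Ioi 0) :=
  integrableOn_Ioi_deriv_of_nonneg' (fun y _ => ker_deriv s ξ hξ hs y)
    (fun y hy => mul_nonneg (le_of_lt hy) (by positivity)) (ker_tendsto s ξ hs)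

lemma ker_val (s ξ : ℝ) (hξ : 0 < ξ) (hs : 1 < s) :
    ∫ y in Set.Ioi (0 : ℝ), y * (y ^ 2 + ξ) ^ (-s) = (2 * (s - 1))⁻¹ * ξ ^ (1 - s) := by
  have := integral_Ioi_of_hasDerivAt_of_nonneg' (fun y _ => ker_deriv s ξ hξ hs y)
    (fun y hy => mul_nonneg (le_of_lt hy) (by positivity)) (ker_tendsto s ξ hs)
  rw [this]
  simp

/-- Absolutely convergent integral. -/
def II (s ξ : ℝ) : ℂ := ∫ y in Set.Ioi (0 : ℝ), Fr y * ((y * (y ^ 2 + ξ) ^ (-s) : ℝ) : ℂ)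

lemma ker_cont (s ξ : ℝ) (hξ : 0 < ξ) :
    Continuous (fun y : ℝ => Fr y * ((y * (y ^ 2 + ξ) ^ (-s) : ℝ) : ℂ)) := by
  apply Fr_cont.mul
  apply Complex.continuous_ofReal.comp
  apply continuous_id.mul
  apply Continuous.rpow_const (by fun_prop)
  intro y; left; positivity

lemma II_integrable (s ξ : ℝ) (hξ : 0 < ξ) (hs : 1 < s) :
    IntegrableOn (fun y : ℝ => Fr y * ((y * (y ^ 2 + ξ) ^ (-s) : ℝ) : ℂ)) (Set.Ioi 0) := by
  obtain ⟨A, hA, hF⟩ := Fr_bdd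
  refine Integrable.mono' ((ker_int s ξ hξ hs).const_mul A)
    (ker_cont s ξ hξ).aestronglyMeasurable ?_
  refine (ae_restrict_iff' measurableSet_Ioi).2 (Eventually.of_forall fun y hy => ?_)
  have hy0 : (0 : ℝ) < y := hy
  rw [norm_mul, Complex.norm_real, Real.norm_of_nonneg (by positivity)]
  exact mul_le_mul_of_nonneg_right (hF y hy0.le) (by positivity)

lemma II_bound : ∃ A : ℝ, 0 ≤ A ∧ ∀ s ξ : ℝ, 0 < ξ → 1 < s →
    ‖II s ξ‖ ≤ A * ((2 * (s - 1))⁻¹ * ξ ^ (1 - s)) := by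
  obtain ⟨A, hA, hF⟩ := Fr_bdd
  refine ⟨A, hA, fun s ξ hξ hs => ?_⟩
  rw [← ker_val s ξ hξ hs, ← integral_const_mul]
  refine norm_integral_le_of_norm_le ((ker_int s ξ hξ hs).const_mul A) ?_
  refine (ae_restrict_iff' measurableSet_Ioi).2 (Eventually.of_forall fun y hy => ?_)
  have hy0 : (0 : ℝ) < y := hy
  rw [norm_mul, Complex.norm_real, Real.norm_of_nonneg (by positivity)]
  exact mul_le_mul_of_nonneg_right (hF y hy0.le) (by positivity)

lemma II_deriv (s ξ : ℝ) (hξ : 0 < ξ) (hs : 1 < s) :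
    HasDerivAt (II s) (((-s : ℝ) : ℂ) * II (s + 1) ξ) ξ := by
  obtain ⟨A, hA, hF⟩ := Fr_bdd
  have hball : ∀ x ∈ Metric.ball ξ (ξ / 2), ξ / 2 < x := by
    intro x hx
    rw [Metric.mem_ball, Real.dist_eq, abs_lt] at hx
    linarith [hx.1]
  have key := hasDerivAt_integral_of_dominated_loc_of_deriv_le
    (μ := volume.restrict (Set.Ioi (0 : ℝ))) (x₀ := ξ)
    (s := Metric.ball ξ (ξ / 2))
    (F := fun ξ y => Fr y * ((y * (y ^ 2 + ξ) ^ (-s) : ℝ) : ℂ))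
    (F' := fun ξ y => ((-s : ℝ) : ℂ) * (Fr y * ((y * (y ^ 2 + ξ) ^ (-(s + 1)) : ℝ) : ℂ)))
    (bound := fun y => s * (A * (y * (y ^ 2 + ξ / 2) ^ (-(s + 1)))))
    (Metric.ball_mem_nhds _ (by positivity))
    ?_ (II_integrable s ξ hξ hs) ?_ ?_ ?_ ?_
  · have h := key.2
    rw [integral_const_mul] at h
    exact h
  · filter_upwards [Metric.ball_mem_nhds ξ (show 0 < ξ / 2 by positivity)] with x hx
    exact (ker_cont s x (by linarith [hball x hx])).aestronglyMeasurable
  · exact (continuous_const.mul (ker_cont (s + 1) ξ hξ)).aestronglyMeasurable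
  · refine (ae_restrict_iff' measurableSet_Ioi).2 (Eventually.of_forall fun y hy x hx => ?_)
    have hy0 : (0 : ℝ) < y := hy
    have hx' := hball x hx
    have hx0 : 0 < x := by linarith
    rw [norm_mul, norm_mul, Complex.norm_real, Complex.norm_real, norm_neg,
      Real.norm_of_nonneg (by linarith), Real.norm_of_nonneg (by positivity)]
    apply mul_le_mul_of_nonneg_left _ (by linarith)
    apply mul_le_mul (hF y hy0.le) _ (by positivity) hA
    apply mul_le_mul_of_nonneg_left _ hy0.le
    exact Real.rpow_le_rpow_of_nonpos (by positivity) (by linarith) (by linarith)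
  · exact ((ker_int (s + 1) (ξ / 2) (by positivity) (by linarith)).const_mul A).const_mul s
  · refine Eventually.of_forall fun y x hx => ?_
    have hx' := hball x hx
    have hp : 0 < y ^ 2 + x := by have := sq_nonneg y; linarith
    have h1 : HasDerivAt (fun x : ℝ => y ^ 2 + x) 1 x := (hasDerivAt_id x).const_add _
    have h2 := (h1.rpow_const (p := -s) (Or.inl hp.ne')).const_mul y
    have h3 := h2.ofReal_comp.const_mul (Fr y)
    refine HasDerivAt.congr_deriv h3 ?_
    rw [show -s - 1 = -(s + 1) by ring]
    push_cast; ring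

lemma II_contDiff (n : ℕ) : ∀ s : ℝ, 1 < s → ContDiffOn ℝ n (II s) (Set.Ioi 0) := by
  induction n with
  | zero =>
    intro s hs
    exact contDiffOn_zero.2 fun x hx => (II_deriv s x hx hs).continuousAt.continuousWithinAt
  | succ n ih =>
    intro s hs
    push_cast
    rw [contDiffOn_succ_iff_deriv_of_isOpen isOpen_Ioi]
    refine ⟨fun x hx => (II_deriv s x hx hs).differentiableAt.differentiableWithinAt,
      by simp, ?_⟩
    refine ContDiffOn.congr (contDiffOn_const.mul (ih (s + 1) (by linarith)))
      fun x hx => (II_deriv s x hx hs).deriv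

lemma II_iter (n : ℕ) : ∀ s : ℝ, 1 < s → ∃ c : ℂ, ∀ ξ : ℝ, 0 < ξ →
    iteratedDerivWithin n (II s) (Set.Ioi 0) ξ = c * II (s + n) ξ := by
  intro s hs
  induction n with
  | zero => exact ⟨1, fun ξ _ => by simp⟩
  | succ n ih =>
    obtain ⟨c, hc⟩ := ih
    refine ⟨c * ((-(s + n) : ℝ) : ℂ), fun ξ hξ => ?_⟩
    have hsn : 1 < s + n := by have : (0 : ℝ) ≤ n := n.cast_nonneg; linarith
    rw [iteratedDerivWithin_succ, derivWithin_congr (s := Set.Ioi 0) (fun x hx => hc x hx) (hc ξ hξ),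
      ((II_deriv (s + n) ξ hξ hsn).const_mul c).hasDerivWithinAt.derivWithin
        (isOpen_Ioi.uniqueDiffWithinAt hξ)]
    push_cast
    rw [add_assoc s]
    ring

lemma vY_tendsto (ξ : ℝ) (hξ : 0 < ξ) :
    Tendsto (fun T : ℝ => ∫ y in (0 : ℝ)..T, e (y ^ 2) / Real.sqrt (y ^ 2 + ξ)) atTop
      (nhds (II (3 / 2) ξ)) := by
  obtain ⟨A, hA, hF⟩ := Fr_bdd
  have hs : ∀ y : ℝ, e (y ^ 2) / Real.sqrt (y ^ 2 + ξ)
      = e (y ^ 2) * (((y ^ 2 + ξ) ^ (-(1 / 2) : ℝ) : ℝ) : ℂ) := by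
    intro y
    rw [Real.rpow_neg (by positivity), ← Real.sqrt_eq_rpow, Complex.ofReal_inv, div_eq_mul_inv]
  have hc : Continuous fun u : ℝ => e (u ^ 2) := e_cont.comp (by fun_prop)
  have hd : ∀ y : ℝ, HasDerivAt (fun y : ℝ => Fr y * (((y ^ 2 + ξ) ^ (-(1 / 2) : ℝ) : ℝ) : ℂ))
      (e (y ^ 2) * (((y ^ 2 + ξ) ^ (-(1 / 2) : ℝ) : ℝ) : ℂ)
        - Fr y * ((y * (y ^ 2 + ξ) ^ (-(3 / 2) : ℝ) : ℝ) : ℂ)) y := by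
    intro y
    have hp : 0 < y ^ 2 + ξ := by positivity
    have h1 : HasDerivAt (fun y : ℝ => y ^ 2 + ξ) (2 * y) y := by
      simpa using (hasDerivAt_pow 2 y).add_const ξ
    have h2 := (h1.rpow_const (p := -(1 / 2)) (Or.inl hp.ne')).ofReal_comp
    refine HasDerivAt.congr_deriv ((Fr_deriv y).mul h2) ?_
    rw [show (-(1 / 2) - 1 : ℝ) = -(3 / 2) by norm_num]
    push_cast; ring
  have hc1 : Continuous fun y : ℝ => e (y ^ 2) * (((y ^ 2 + ξ) ^ (-(1 / 2) : ℝ) : ℝ) : ℂ) := by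
    apply hc.mul
    apply Complex.continuous_ofReal.comp
    apply Continuous.rpow_const (by fun_prop)
    intro y; left; positivity
  have hc2 := ker_cont (3 / 2) ξ hξ
  have hI : ∀ T : ℝ, ∫ y in (0 : ℝ)..T, e (y ^ 2) / Real.sqrt (y ^ 2 + ξ)
      = Fr T * (((T ^ 2 + ξ) ^ (-(1 / 2) : ℝ) : ℝ) : ℂ)
        + ∫ y in (0 : ℝ)..T, Fr y * ((y * (y ^ 2 + ξ) ^ (-(3 / 2) : ℝ) : ℝ) : ℂ) := by
    intro T
    have h := intervalIntegral.integral_eq_sub_of_hasDerivAt (a := 0) (b := T)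
      (fun y _ => hd y) ((hc1.sub hc2).intervalIntegrable _ _)
    rw [intervalIntegral.integral_sub (hc1.intervalIntegrable _ _)
      (hc2.intervalIntegrable _ _)] at h
    have h0 : Fr 0 = 0 := by simp [Fr]
    rw [h0, zero_mul, sub_zero] at h
    simp only [hs]
    rw [← h]; ring
  simp only [hI]
  rw [← zero_add (II (3 / 2) ξ)]
  refine Tendsto.add ?_ ?_
  · have h1 : Tendsto (fun y : ℝ => y ^ 2 + ξ) atTop atTop :=
      tendsto_atTop_add_const_right _ _ (tendsto_pow_atTop (by norm_num))
    have h2 := ((tendsto_rpow_neg_atTop (y := 1 / 2) (by norm_num)).comp h1).const_mul A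
    rw [mul_zero] at h2
    refine squeeze_zero_norm' ?_ h2
    filter_upwards [eventually_ge_atTop 0] with T hT
    rw [norm_mul, Complex.norm_real, Real.norm_of_nonneg (by positivity)]
    exact mul_le_mul_of_nonneg_right (hF T hT) (by positivity)
  · exact intervalIntegral_tendsto_integral_Ioi 0 (II_integrable (3 / 2) ξ hξ (by norm_num))
      tendsto_id

lemma vY_eq (ξ : ℝ) (hξ : 0 < ξ) : vY ξ = -(2 / Real.pi) * II (3 / 2) ξ := by
  unfold vY
  rw [(vY_tendsto ξ hξ).limUnder_eq]

lemma cosh_int (ξ : ℝ) (hξ : 0 < ξ) (T : ℝ) :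
    ∫ t in (0 : ℝ)..T, Real.cos (ξ * Real.cosh t) =
      (2 * e (ξ / (2 * Real.pi)) * ∫ y in (0 : ℝ)..(Real.sqrt (ξ / Real.pi) * Real.sinh (T / 2)),
        e (y ^ 2) / Real.sqrt (y ^ 2 + ξ / Real.pi)).re := by
  have hpi := Real.pi_pos
  have hq : 0 < ξ / Real.pi := by positivity
  set r := Real.sqrt (ξ / Real.pi) with hr
  have hr0 : 0 < r := Real.sqrt_pos.2 hq
  have hr2 : r ^ 2 = ξ / Real.pi := Real.sq_sqrt hq.le
  have hd : ∀ t : ℝ, HasDerivAt (fun t : ℝ => r * Real.sinh (t / 2))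
      (r * (Real.cosh (t / 2) * (1 / 2))) t := fun t =>
    (((hasDerivAt_id t).div_const 2).sinh).const_mul r
  have hcg : Continuous fun y : ℝ => e (y ^ 2) / (Real.sqrt (y ^ 2 + ξ / Real.pi) : ℂ) := by
    apply Continuous.div (e_cont.comp (by fun_prop)) (by fun_prop)
    intro y
    have : 0 < Real.sqrt (y ^ 2 + ξ / Real.pi) := Real.sqrt_pos.2 (by positivity)
    exact_mod_cast this.ne'
  have hcv := intervalIntegral.integral_deriv_smul_comp (a := 0) (b := T)
    (f := fun t : ℝ => r * Real.sinh (t / 2))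
    (f' := fun t : ℝ => r * (Real.cosh (t / 2) * (1 / 2)))
    (g := fun y : ℝ => e (y ^ 2) / (Real.sqrt (y ^ 2 + ξ / Real.pi) : ℂ))
    (fun t _ => hd t) (by fun_prop) hcg
  simp only [zero_div, Real.sinh_zero, mul_zero] at hcv
  rw [← hcv, ← intervalIntegral.integral_const_mul]
  have hpt : ∀ t : ℝ, 2 * e (ξ / (2 * Real.pi)) * ((r * (Real.cosh (t / 2) * (1 / 2))) •
      ((fun y : ℝ => e (y ^ 2) / (Real.sqrt (y ^ 2 + ξ / Real.pi) : ℂ)) ∘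
        (fun t : ℝ => r * Real.sinh (t / 2))) t)
      = Complex.exp (((ξ * Real.cosh t : ℝ) : ℂ) * Complex.I) := by
    intro t
    have hch := Real.cosh_pos (t / 2)
    have hsq : Real.sqrt ((r * Real.sinh (t / 2)) ^ 2 + ξ / Real.pi) = r * Real.cosh (t / 2) := by
      rw [← hr2, show (r * Real.sinh (t / 2)) ^ 2 + r ^ 2 = (r * Real.cosh (t / 2)) ^ 2 by
        rw [mul_pow, mul_pow, Real.cosh_sq]; ring]
      exact Real.sqrt_sq (by positivity)
    have hcosh : Real.cosh t = 1 + 2 * Real.sinh (t / 2) ^ 2 := by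
      have := Real.cosh_two_mul (t / 2)
      rw [Real.cosh_sq, show 2 * (t / 2) = t by ring] at this
      rw [this]; ring
    have hn : (r : ℂ) * (Real.cosh (t / 2) : ℂ) ≠ 0 := by
      exact_mod_cast (mul_pos hr0 hch).ne'
    have he : e (ξ / (2 * Real.pi)) * e ((r * Real.sinh (t / 2)) ^ 2) =
        Complex.exp (((ξ * Real.cosh t : ℝ) : ℂ) * Complex.I) := by
      unfold e
      rw [← Complex.exp_add, mul_pow, hr2, hcosh]
      congr 1
      have hpi' : (Real.pi : ℂ) ≠ 0 := by exact_mod_cast hpi.ne'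
      push_cast
      field_simp
    rw [← he]
    simp only [Function.comp, hsq, Complex.real_smul]
    rw [Complex.ofReal_mul, Complex.ofReal_mul, Complex.ofReal_mul]
    have h1 : (r : ℂ) ≠ 0 := left_ne_zero_of_mul hn
    have h2 : (Real.cosh (t / 2) : ℂ) ≠ 0 := right_ne_zero_of_mul hn
    generalize (Real.cosh (t / 2) : ℂ) = z at h2 ⊢
    push_cast
    field_simp
  simp only [hpt]
  have hci : Continuous fun t : ℝ => Complex.exp (((ξ * Real.cosh t : ℝ) : ℂ) * Complex.I) := by
    fun_prop
  have := Complex.reCLM.intervalIntegral_comp_comm (hci.intervalIntegrable (μ := volume) 0 T)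
  simp only [Complex.reCLM_apply, Complex.exp_ofReal_mul_I_re] at this
  exact this

lemma Y0_eq (ξ : ℝ) (hξ : 0 < ξ) :
    Y₀ ξ = 2 * (e (ξ / (2 * Real.pi)) * vY (ξ / Real.pi)).re := by
  have hq : 0 < ξ / Real.pi := div_pos hξ Real.pi_pos
  have hS : Tendsto (fun T : ℝ => Real.sqrt (ξ / Real.pi) * Real.sinh (T / 2)) atTop atTop := by
    apply Tendsto.const_mul_atTop (Real.sqrt_pos.2 hq)
    refine tendsto_atTop_mono' atTop ?_ (tendsto_id.atTop_div_const (r := (2 : ℝ)) two_pos)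
    filter_upwards [eventually_ge_atTop 0] with T hT
    exact Real.self_le_sinh_iff.2 (by simp only [id]; positivity)
  have h1 := ((vY_tendsto _ hq).comp hS).const_mul (2 * e (ξ / (2 * Real.pi)))
  have h2 := (Complex.continuous_re.tendsto _).comp h1
  have h3 : Tendsto (fun T : ℝ => ∫ t in (0 : ℝ)..T, Real.cos (ξ * Real.cosh t)) atTop
      (nhds (2 * e (ξ / (2 * Real.pi)) * II (3 / 2) (ξ / Real.pi)).re) := by
    refine h2.congr fun T => ?_
    rw [cosh_int ξ hξ T]; rfl
  unfold Y₀
  rw [h3.limUnder_eq, vY_eq _ hq]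
  have : e (ξ / (2 * Real.pi)) * (-(2 / Real.pi) * II (3 / 2) (ξ / Real.pi))
      = ((-(1 / Real.pi) : ℝ) : ℂ) *
        (2 * e (ξ / (2 * Real.pi)) * II (3 / 2) (ξ / Real.pi)) := by
    push_cast; ring
  rw [this, Complex.re_ofReal_mul]
  ring

/-- `v_Y` is smooth on `(0,∞)`, represents `Y₀` as an oscillating function via
`Y₀(ξ) = 2 Re(e(ξ/2π) v_Y(ξ/π))`, and all its derivatives satisfy
`v_Y^{(μ)}(ξ) ≪ ξ^{-μ-1/2}` for `ξ ≥ 1`. -/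
theorem vY_properties :
    ContDiffOn ℝ (⊤ : ℕ∞) vY (Set.Ioi 0) ∧
    (∀ ξ : ℝ, 0 < ξ → Y₀ ξ = 2 * (e (ξ / (2 * Real.pi)) * vY (ξ / Real.pi)).re) ∧
    (∀ μ : ℕ, ∃ C : ℝ, ∀ ξ : ℝ, 1 ≤ ξ →
      ‖iteratedDerivWithin μ vY (Set.Ioi 0) ξ‖ ≤ C * ξ ^ (-(μ : ℝ) - 1 / 2)) := by
  refine ⟨?_, Y0_eq, fun μ => ?_⟩
  · refine ContDiffOn.congr (contDiffOn_const.mul (contDiffOn_infty.2 fun n =>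
      II_contDiff n (3 / 2) (by norm_num))) fun x hx => vY_eq x hx
  · obtain ⟨A, hA, hb⟩ := II_bound
    obtain ⟨c, hc⟩ := II_iter μ (3 / 2) (by norm_num)
    refine ⟨‖(-(2 / Real.pi) : ℂ)‖ * (‖c‖ * (A * (2 * ((3 / 2 + μ : ℝ) - 1))⁻¹)),
      fun ξ hξ => ?_⟩
    have h0 : 0 < ξ := by linarith
    have hm : (0 : ℝ) ≤ μ := μ.cast_nonneg
    have hcongr : iteratedDerivWithin μ vY (Set.Ioi 0) ξ =
        -(2 / Real.pi) * iteratedDerivWithin μ (II (3 / 2)) (Set.Ioi 0) ξ := by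
      rw [iteratedDerivWithin_congr (s := Set.Ioi 0) (g := fun x => (-(2 / Real.pi) : ℂ) * II (3 / 2) x)
        (fun x hx => vY_eq x hx) h0]
      exact iteratedDerivWithin_const_mul h0 isOpen_Ioi.uniqueDiffOn _
        (II_contDiff μ (3 / 2) (by norm_num) ξ h0)
    rw [hcongr, hc ξ h0, norm_mul, norm_mul]
    have h := hb (3 / 2 + μ) ξ h0 (by linarith)
    rw [show (1 - (3 / 2 + μ) : ℝ) = -(μ : ℝ) - 1 / 2 by ring] at h
    calc _ ≤ ‖(-(2 / Real.pi) : ℂ)‖ * (‖c‖ * (A * ((2 * ((3 / 2 + μ : ℝ) - 1))⁻¹ *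
          ξ ^ (-(μ : ℝ) - 1 / 2)))) := by gcongr
      _ = _ := by ring
end
end
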